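/- arXiv:1203.0046 — 7 statements merged into one kernel-verified Lean document; each statement's English description precedes it below -/
import Mathlib

section
/- Let u₂ > 0 and let x : ℝ → ℝ be twice differentiable with x(t) > 0 for all t and ẍ(t) = −u₂·x(t) + 1/x(t)³ for all t. Then x is periodic with period π/√u₂: for all t ∈ ℝ, x(t + π/√u₂) = x(t) and ẋ(t + π/√u₂) = ẋ(t). (Every Y-trajectory in the open half-plane x₁ > 0 is a closed curve of period π/√u₂.) -/
open Real

/-!
Along a solution the energy `E = ẋ² + u x² + k / x²` is conserved, and `(x²)¨ = 2 (ẋ² + x ẍ)`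
becomes `2 E - 4 u x²` once `ẋ²` is eliminated through `E`. So `x²` is a harmonic oscillator of
angular frequency `2 √u` about `E / (2 u)`, of period `π / √u`. A continuous function that never
vanishes has constant sign, so the period passes from `x²` to `x`, and by differentiation to `ẋ`.
-/

section HarmonicOscillator

variable {E : Type*} [NormedAddCommGroup E] [NormedSpace ℝ E] {ω : ℝ} {f g : ℝ → E}

theorem harmonicOscillator_eq_cos_smul_add_sin_smul (hω : ω ≠ 0) (hf : ∀ t, HasDerivAt f (g t) t)
    (hg : ∀ t, HasDerivAt g (-ω ^ 2 • f t) t) (s t : ℝ) :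
    f t = cos (ω * (t - s)) • f s + (sin (ω * (t - s)) / ω) • g s := by
  -- The solution formula propagating the state at time `r` to time `t` does not depend on `r`.
  let state : ℝ → E := fun r ↦ cos (ω * (t - r)) • f r + (sin (ω * (t - r)) / ω) • g r
  have hderiv (r : ℝ) : HasDerivAt state 0 r := by
    have harg : HasDerivAt (fun r ↦ ω * (t - r)) (-ω) r := by
      simpa using ((hasDerivAt_id r).const_sub t).const_mul ω
    refine ((harg.cos.smul (hf r)).add ((harg.sin.div_const ω).smul (hg r))).congr_deriv ?_
    match_scalars <;> field_simp <;> ring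
  have hconst : state t = state s :=
    is_const_of_deriv_eq_zero (fun r ↦ (hderiv r).differentiableAt) (fun r ↦ (hderiv r).deriv) t s
  simpa [state] using hconst

theorem harmonicOscillator_periodic (hω : ω ≠ 0) (hf : ∀ t, HasDerivAt f (g t) t)
    (hg : ∀ t, HasDerivAt g (-ω ^ 2 • f t) t) : Function.Periodic f (2 * π / ω) := by
  intro t
  have hangle : ω * (2 * π / ω) = 2 * π := mul_div_cancel₀ _ hω
  simpa [hangle] using harmonicOscillator_eq_cos_smul_add_sin_smul hω hf hg t (t + 2 * π / ω)

end HarmonicOscillator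

theorem periodic_of_periodic_sq {X R : Type*} [Add X] [TopologicalSpace X] [PreconnectedSpace X]
    [CommRing R] [LinearOrder R] [IsStrictOrderedRing R] [TopologicalSpace R]
    [OrderClosedTopology R] {f : X → R} {c : X} (hf : Continuous f) (hf₀ : ∀ t, f t ≠ 0)
    (hsq : Function.Periodic (fun t ↦ f t ^ 2) c) : Function.Periodic f c := by
  intro t
  refine (sq_eq_sq_iff_eq_or_eq_neg.1 (hsq t)).resolve_right fun hneg ↦ ?_
  have hzero : (0 : R) ∈ Set.range f := by
    rcases le_total (f t) 0 with hle | hge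
    · exact mem_range_of_exists_le_of_exists_ge hf ⟨t, hle⟩ ⟨t + c, by simpa [hneg] using hle⟩
    · exact mem_range_of_exists_le_of_exists_ge hf ⟨t + c, by simpa [hneg] using hge⟩ ⟨t, hge⟩
  obtain ⟨s, hs⟩ := hzero
  exact hf₀ s hs

theorem periodic_derivative_of_periodic {𝕜 F : Type*} [NontriviallyNormedField 𝕜]
    [NormedAddCommGroup F] [NormedSpace 𝕜 F] {f f' : 𝕜 → F} {c : 𝕜}
    (hf : ∀ t, HasDerivAt f (f' t) t) (hc : Function.Periodic f c) : Function.Periodic f' c := by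
  intro t
  have hshift : HasDerivAt f (f' (t + c)) t := by
    simpa only [hc _] using (hf (t + c)).comp_add_const t c
  exact hshift.unique (hf t)

/-- `x` and `v` are the position and the velocity of a nowhere vanishing solution, defined for all
times, of the Ermakov equation `ẍ = -u x + k / x³`. -/
structure IsErmakovSolution (u k : ℝ) (x v : ℝ → ℝ) : Prop where
  ne_zero (t : ℝ) : x t ≠ 0
  hasDerivAt_position (t : ℝ) : HasDerivAt x (v t) t
  hasDerivAt_velocity (t : ℝ) : HasDerivAt v (-u * x t + k / x t ^ 3) t

/-- Twice the mechanical energy of the Ermakov equation `ẍ = -u x + k / x³` at position `x` and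
velocity `v`; it is the first integral of the equation. -/
noncomputable def ermakovEnergy (u k x v : ℝ) : ℝ :=
  v ^ 2 + u * x ^ 2 + k / x ^ 2

namespace IsErmakovSolution

variable {u k : ℝ} {x v : ℝ → ℝ}

theorem energy_eq (h : IsErmakovSolution u k x v) (s t : ℝ) :
    ermakovEnergy u k (x s) (v s) = ermakovEnergy u k (x t) (v t) := by
  have henergy (r : ℝ) : HasDerivAt (fun r ↦ ermakovEnergy u k (x r) (v r)) 0 r := by
    have hx := (h.hasDerivAt_position r).fun_pow 2
    have hv := (h.hasDerivAt_velocity r).fun_pow 2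
    have hne := h.ne_zero r
    refine ((hv.add (hx.const_mul u)).add ((hasDerivAt_const r k).div hx
      (pow_ne_zero 2 hne))).congr_deriv ?_
    field_simp
    ring
  exact is_const_of_deriv_eq_zero (fun r ↦ (henergy r).differentiableAt)
    (fun r ↦ (henergy r).deriv) s t

theorem hasDerivAt_sq (h : IsErmakovSolution u k x v) (t : ℝ) :
    HasDerivAt (fun t ↦ x t ^ 2) (2 * (x t * v t)) t := by
  refine ((h.hasDerivAt_position t).fun_pow 2).congr_deriv ?_
  ring

theorem hasDerivAt_deriv_sq (h : IsErmakovSolution u k x v) (t : ℝ) :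
    HasDerivAt (fun t ↦ 2 * (x t * v t))
      (2 * ermakovEnergy u k (x t) (v t) - 4 * u * x t ^ 2) t := by
  have hne := h.ne_zero t
  refine (((h.hasDerivAt_position t).fun_mul (h.hasDerivAt_velocity t)).const_mul 2).congr_deriv ?_
  unfold ermakovEnergy
  field_simp
  ring

theorem periodic_sq (h : IsErmakovSolution u k x v) (hu : 0 < u) :
    Function.Periodic (fun t ↦ x t ^ 2) (π / √u) := by
  let center := ermakovEnergy u k (x 0) (v 0) / (2 * u)
  have hf (t : ℝ) : HasDerivAt (fun t ↦ x t ^ 2 - center) (2 * (x t * v t)) t :=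
    (h.hasDerivAt_sq t).sub_const center
  have hg (t : ℝ) : HasDerivAt (fun t ↦ 2 * (x t * v t))
      (-(2 * √u) ^ 2 • (x t ^ 2 - center)) t := by
    refine (h.hasDerivAt_deriv_sq t).congr_deriv ?_
    rw [h.energy_eq t 0, mul_pow, sq_sqrt hu.le, smul_eq_mul]
    simp only [center]
    field_simp
    ring
  have hperiodic : Function.Periodic (fun t ↦ x t ^ 2 - center) (π / √u) := by
    simpa only [mul_div_mul_left π (√u) two_ne_zero] using
      harmonicOscillator_periodic (mul_ne_zero two_ne_zero (sqrt_ne_zero'.2 hu)) hf hg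
  exact fun t ↦ sub_left_injective (hperiodic t)

end IsErmakovSolution

theorem Y_trajectory_periodic_general {u k : ℝ} {x v : ℝ → ℝ} (hu : 0 < u)
    (h : IsErmakovSolution u k x v) :
    Function.Periodic x (π / √u) ∧ Function.Periodic v (π / √u) := by
  have hcont : Continuous x :=
    continuous_iff_continuousAt.2 fun t ↦ (h.hasDerivAt_position t).continuousAt
  have hx : Function.Periodic x (π / √u) :=
    periodic_of_periodic_sq hcont h.ne_zero (h.periodic_sq hu)
  exact ⟨hx, periodic_derivative_of_periodic h.hasDerivAt_position hx⟩

/-- Every Y-trajectory (solution of ẍ = −u₂·x + 1/x³ staying in `x > 0`)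
is periodic with period `π / √u₂`: both the position and the velocity return
to their values after time `π / √u₂`. -/
theorem Y_trajectory_periodic
    (u₂ : ℝ) (hu₂ : 0 < u₂) (x : ℝ → ℝ)
    (hpos : ∀ t, 0 < x t)
    (hd₁ : Differentiable ℝ x)
    (hd₂ : Differentiable ℝ (deriv x))
    (hode : ∀ t, deriv (deriv x) t = -u₂ * x t + 1 / (x t) ^ 3) :
    ∀ t : ℝ, x (t + π / Real.sqrt u₂) = x t ∧
      deriv x (t + π / Real.sqrt u₂) = deriv x t := by
  have hsol : IsErmakovSolution u₂ 1 x (deriv x) :=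
    ⟨fun t ↦ (hpos t).ne', fun t ↦ (hd₁ t).hasDerivAt, fun t ↦ hode t ▸ (hd₂ t).hasDerivAt⟩
  exact forall_and.2 (Y_trajectory_periodic_general hu₂ hsol)
end

section
/- On the domain D = {(x₁,x₂) ∈ ℝ² : x₁ > 0}, with f(x₁,x₂) = (x₂, 1/x₁³) and g(x₁,x₂) = (0, −x₁), the iterated Lie bracket relations [f,[f,g]] = 2f and [g,[f,g]] = −2g hold at every point of D; in particular the Lie algebra generated by f and g is finite dimensional, spanned by f, g and [f,g]. -/
/-- The drift vector field `f(x₁,x₂) = (x₂, 1/x₁³)`. -/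
noncomputable def driftField (p : ℝ × ℝ) : ℝ × ℝ := (p.2, 1 / p.1 ^ 3)

/-- The control vector field `g(x₁,x₂) = (0, −x₁)`. -/
noncomputable def controlField (p : ℝ × ℝ) : ℝ × ℝ := (0, -p.1)

/-- The Lie bracket of vector fields `h, k` on `ℝ²`:
`[h,k](x) = Dk(x)·h(x) − Dh(x)·k(x)`. -/
noncomputable def lieBracketVF (h k : ℝ × ℝ → ℝ × ℝ) (p : ℝ × ℝ) : ℝ × ℝ :=
  fderiv ℝ k p (h p) - fderiv ℝ h p (k p)

/-!
Away from the line `x₁ = 0`, the bracket `[f,g]` is the linear field `(x₁, -x₂)`, the generator of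
the hyperbolic scaling `(x₁, x₂) ↦ (eᵗ x₁, e⁻ᵗ x₂)`. Both `f` and `g` are homogeneous under this
scaling, hence are eigenvectors of the bracket with `[f,g]`, with opposite eigenvalues: the three
fields satisfy the relations of `sl₂`.
-/

open Filter Topology
open VectorField (lieBracket lieBracket_swap)

section Closure

variable {𝕜 E : Type*} [NontriviallyNormedField 𝕜] [NormedAddCommGroup E] [NormedSpace 𝕜 E]

theorem exists_lieBracket_eq_of_lieBracket_lieBracket_eq_smul {V W : E → E} {s : Set E}
    {α β : 𝕜} (hV : ∀ x ∈ s, lieBracket 𝕜 V (lieBracket 𝕜 V W) x = α • V x)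
    (hW : ∀ x ∈ s, lieBracket 𝕜 W (lieBracket 𝕜 V W) x = β • W x) {h k : E → E}
    (hh : h ∈ ({V, W, lieBracket 𝕜 V W} : Set (E → E)))
    (hk : k ∈ ({V, W, lieBracket 𝕜 V W} : Set (E → E))) :
    ∃ a b c : 𝕜, ∀ x ∈ s,
      lieBracket 𝕜 h k x = a • V x + b • W x + c • lieBracket 𝕜 V W x := by
  rcases hh with rfl | rfl | rfl <;> rcases hk with rfl | rfl | rfl
  · exact ⟨0, 0, 0, fun x _ ↦ by simp⟩
  · exact ⟨0, 0, 1, fun x _ ↦ by simp⟩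
  · exact ⟨α, 0, 0, fun x hx ↦ by simp [hV x hx]⟩
  · exact ⟨0, 0, -1, fun x _ ↦ lieBracket_swap.trans (by simp)⟩
  · exact ⟨0, 0, 0, fun x _ ↦ by simp⟩
  · exact ⟨0, β, 0, fun x hx ↦ by simp [hW x hx]⟩
  · exact ⟨-α, 0, 0, fun x hx ↦ lieBracket_swap.trans (by simp [hV x hx])⟩
  · exact ⟨0, -β, 0, fun x hx ↦ lieBracket_swap.trans (by simp [hW x hx])⟩
  · exact ⟨0, 0, 0, fun x _ ↦ by simp⟩

end Closure

/-- The linear vector field `(x₁, -x₂)`, which generates the hyperbolic scaling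
`(x₁, x₂) ↦ (eᵗ x₁, e⁻ᵗ x₂)` and represents `[f,g]` away from the line `x₁ = 0`. -/
def scalingField (p : ℝ × ℝ) : ℝ × ℝ := (p.1, -p.2)

theorem lieBracketVF_eq_lieBracket : lieBracketVF = lieBracket ℝ := rfl

theorem hasFDerivAt_driftField {p : ℝ × ℝ} (hp : p.1 ≠ 0) :
    HasFDerivAt driftField
      ((ContinuousLinearMap.snd ℝ ℝ ℝ).prod ((-3 / p.1 ^ 4) • ContinuousLinearMap.fst ℝ ℝ ℝ))
      p := by
  have hcube : HasDerivAt (fun t : ℝ ↦ 1 / t ^ 3) (-3 / p.1 ^ 4) p.1 := by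
    simp only [one_div]
    refine ((hasDerivAt_pow 3 p.1).fun_inv (pow_ne_zero 3 hp)).congr_deriv ?_
    push_cast
    field_simp
  exact hasFDerivAt_snd.prodMk (hcube.comp_hasFDerivAt p hasFDerivAt_fst)

theorem hasFDerivAt_controlField (p : ℝ × ℝ) :
    HasFDerivAt controlField
      ((0 : ℝ × ℝ →L[ℝ] ℝ).prod (-ContinuousLinearMap.fst ℝ ℝ ℝ)) p :=
  ((0 : ℝ × ℝ →L[ℝ] ℝ).prod (-ContinuousLinearMap.fst ℝ ℝ ℝ)).hasFDerivAt

theorem hasFDerivAt_scalingField (p : ℝ × ℝ) :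
    HasFDerivAt scalingField
      ((ContinuousLinearMap.fst ℝ ℝ ℝ).prod (-ContinuousLinearMap.snd ℝ ℝ ℝ)) p :=
  ((ContinuousLinearMap.fst ℝ ℝ ℝ).prod (-ContinuousLinearMap.snd ℝ ℝ ℝ)).hasFDerivAt

theorem lieBracket_driftField_controlField {p : ℝ × ℝ} (hp : p.1 ≠ 0) :
    lieBracket ℝ driftField controlField p = scalingField p := by
  simp [lieBracket, (hasFDerivAt_driftField hp).fderiv, (hasFDerivAt_controlField p).fderiv,
    driftField, controlField, scalingField]

theorem lieBracket_driftField_scalingField {p : ℝ × ℝ} (hp : p.1 ≠ 0) :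
    lieBracket ℝ driftField scalingField p = (2 : ℝ) • driftField p := by
  rw [lieBracket, (hasFDerivAt_driftField hp).fderiv, (hasFDerivAt_scalingField p).fderiv]
  simp only [driftField, scalingField, ContinuousLinearMap.prod_apply, neg_apply, smul_apply,
    ContinuousLinearMap.coe_fst', ContinuousLinearMap.coe_snd', smul_eq_mul, Prod.mk_sub_mk,
    Prod.smul_mk]
  exact Prod.ext (by ring) (by field_simp; ring)

theorem lieBracket_controlField_scalingField (p : ℝ × ℝ) :
    lieBracket ℝ controlField scalingField p = (-2 : ℝ) • controlField p := by
  rw [lieBracket, (hasFDerivAt_controlField p).fderiv, (hasFDerivAt_scalingField p).fderiv]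
  simp only [controlField, scalingField, ContinuousLinearMap.prod_apply, neg_apply, zero_apply,
    ContinuousLinearMap.coe_fst', ContinuousLinearMap.coe_snd', smul_eq_mul, Prod.mk_sub_mk,
    Prod.smul_mk]
  exact Prod.ext (by ring) (by ring)

theorem lieBracket_driftField_controlField_eventuallyEq {p : ℝ × ℝ} (hp : p.1 ≠ 0) :
    lieBracket ℝ driftField controlField =ᶠ[𝓝 p] scalingField :=
  (continuousAt_fst.eventually_ne hp).mono fun _ ↦ lieBracket_driftField_controlField

theorem lieBracket_lieBracket_eq_lieBracket_scalingField (V : ℝ × ℝ → ℝ × ℝ) {p : ℝ × ℝ}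
    (hp : p.1 ≠ 0) :
    lieBracket ℝ V (lieBracket ℝ driftField controlField) p = lieBracket ℝ V scalingField p :=
  EventuallyEq.rfl.lieBracket_vectorField_eq (lieBracket_driftField_controlField_eventuallyEq hp)

theorem lie_algebra_relations_general :
    (∀ p : ℝ × ℝ, p.1 ≠ 0 →
        lieBracketVF driftField (lieBracketVF driftField controlField) p
          = (2 : ℝ) • driftField p) ∧
    (∀ p : ℝ × ℝ, p.1 ≠ 0 →
        lieBracketVF controlField (lieBracketVF driftField controlField) p
          = (-2 : ℝ) • controlField p) ∧
    (∀ h k : ℝ × ℝ → ℝ × ℝ,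
        h ∈ ({driftField, controlField, lieBracketVF driftField controlField} :
          Set (ℝ × ℝ → ℝ × ℝ)) →
        k ∈ ({driftField, controlField, lieBracketVF driftField controlField} :
          Set (ℝ × ℝ → ℝ × ℝ)) →
        ∃ a b c : ℝ, ∀ p : ℝ × ℝ, p.1 ≠ 0 →
          lieBracketVF h k p
            = a • driftField p + b • controlField p
              + c • lieBracketVF driftField controlField p) := by
  rw [lieBracketVF_eq_lieBracket]
  have drift_relation (p : ℝ × ℝ) (hp : p.1 ≠ 0) :
      lieBracket ℝ driftField (lieBracket ℝ driftField controlField) p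
        = (2 : ℝ) • driftField p :=
    (lieBracket_lieBracket_eq_lieBracket_scalingField driftField hp).trans
      (lieBracket_driftField_scalingField hp)
  have control_relation (p : ℝ × ℝ) (hp : p.1 ≠ 0) :
      lieBracket ℝ controlField (lieBracket ℝ driftField controlField) p
        = (-2 : ℝ) • controlField p :=
    (lieBracket_lieBracket_eq_lieBracket_scalingField controlField hp).trans
      (lieBracket_controlField_scalingField p)
  exact ⟨drift_relation, control_relation, fun _ _ ↦
    exists_lieBracket_eq_of_lieBracket_lieBracket_eq_smul (s := {p : ℝ × ℝ | p.1 ≠ 0})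
      drift_relation control_relation⟩

/-- On `D = {(x₁,x₂) : x₁ > 0}`, with `f(x₁,x₂) = (x₂, 1/x₁³)` and
`g(x₁,x₂) = (0, −x₁)`, the iterated bracket relations `[f,[f,g]] = 2f` and
`[g,[f,g]] = −2g` hold; in particular the Lie algebra generated by `f` and `g`
is finite dimensional, spanned (pointwise on `D`) by `f`, `g` and `[f,g]`:
the bracket of any two fields among `f, g, [f,g]` is, on `D`, a fixed linear
combination of `f`, `g` and `[f,g]`. -/
theorem lie_algebra_relations :
    (∀ p : ℝ × ℝ, 0 < p.1 →
        lieBracketVF driftField (lieBracketVF driftField controlField) p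
          = (2 : ℝ) • driftField p) ∧
    (∀ p : ℝ × ℝ, 0 < p.1 →
        lieBracketVF controlField (lieBracketVF driftField controlField) p
          = (-2 : ℝ) • controlField p) ∧
    (∀ h k : ℝ × ℝ → ℝ × ℝ,
        h ∈ ({driftField, controlField, lieBracketVF driftField controlField} :
          Set (ℝ × ℝ → ℝ × ℝ)) →
        k ∈ ({driftField, controlField, lieBracketVF driftField controlField} :
          Set (ℝ × ℝ → ℝ × ℝ)) →
        ∃ a b c : ℝ, ∀ p : ℝ × ℝ, 0 < p.1 →
          lieBracketVF h k p
            = a • driftField p + b • controlField p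
              + c • lieBracketVF driftField controlField p) := by
  obtain ⟨hf, hg, hclosed⟩ := lie_algebra_relations_general
  exact ⟨fun p hp ↦ hf p hp.ne', fun p hp ↦ hg p hp.ne', fun h k hh hk ↦
    (hclosed h k hh hk).imp fun _ ↦ .imp fun _ ↦ .imp fun _ hp p hpos ↦ hp p hpos.ne'⟩
end

section
/- Let u₂ > 0, κ > 0, μ ∈ ℝ, and let (x₁,x₂) : [0,τ] → ℝ² solve ẋ₁ = x₂, ẋ₂ = −u₂·x₁ + 1/x₁³ with x₁(t) > 0 for all t, x₁(0) = κ, x₂(0) = μ, where τ ∈ (0, π/√u₂) satisfies cos(2√u₂τ) = (μ² − u₂κ²)/(μ² + u₂κ²) and sin(2√u₂τ) = −2√u₂κμ/(μ² + u₂κ²). Then κ·x₂(τ) = −μ·x₁(τ); that is, the ratio x₂/x₁ at the endpoint equals −μ/κ, so the ratio of the coordinates of consecutive switching points joined by a Y-segment has constant magnitude but opposite sign. -/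
/-!
Let `x` be a nowhere vanishing solution of Ermakov's equation `ẍ = -u(t) x + k / x³`. For solutions
`y`, `z` of the linear equation `ÿ = -u(t) y`, the polarized Ermakov–Lewis invariant
`W(x, y) W(x, z) + k y z / x²` is constant, where `W` denotes the Wronskian. Choose `y` proportional
to `x` to first order at time `a`, so that `W(x, y)` vanishes there, and `z` vanishing at `a`: the
invariant is then zero, and at a simple zero `b` of `y` it reduces to `W(x, y) W(x, z)`, which
forces `W(x, z) = 0`.

For `u = ω²` constant, the double-angle formulas say that `b` is a zero of the oscillation `y`
issued from the state `(x a, ẋ a)`. Taking `z t = sin (ω (t - a))` gives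
`ẋ b / x b = ω cot (ω (b - a)) = -ẋ a / x a`.
-/

open Real

/-- `(x, v)` solves Ermakov's equation `ẍ = -u x + k / x³` at the times in `s`, as a first-order
system on the phase space `x ≠ 0`. -/
structure IsErmakovSolOn (u : ℝ → ℝ) (k : ℝ) (x v : ℝ → ℝ) (s : Set ℝ) : Prop where
  ne_zero : ∀ t ∈ s, x t ≠ 0
  hasDerivWithinAt_pos : ∀ t ∈ s, HasDerivWithinAt x (v t) s t
  hasDerivWithinAt_vel : ∀ t ∈ s, HasDerivWithinAt v (-u t * x t + k / x t ^ 3) s t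

/-- `(y, w)` solves the linear oscillator equation `ÿ = -u y` at the times in `s`, as a first-order
system. -/
structure IsOscillatorSolOn (u y w : ℝ → ℝ) (s : Set ℝ) : Prop where
  hasDerivWithinAt_pos : ∀ t ∈ s, HasDerivWithinAt y (w t) s t
  hasDerivWithinAt_vel : ∀ t ∈ s, HasDerivWithinAt w (-u t * y t) s t

/-- The Wronskian of the phase curves `(x, v)` and `(y, w)`; the velocities `v`, `w` are arguments,
rather than derivatives of `x`, `y`. -/
def phaseWronskian (x v y w : ℝ → ℝ) (t : ℝ) : ℝ :=
  x t * w t - v t * y t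

/-- The polarization, bilinear in the oscillator states `(y, w)` and `(z, p)`, of the Ermakov–Lewis
invariant `(x ẏ - ẋ y)² + k (y / x)²`. -/
noncomputable def ermakovLewisForm (k : ℝ) (x v y w z p : ℝ → ℝ) (t : ℝ) : ℝ :=
  phaseWronskian x v y w t * phaseWronskian x v z p t + k * (y t * z t / x t ^ 2)

namespace IsErmakovSolOn

variable {u x v y w z p : ℝ → ℝ} {k a b t : ℝ} {s : Set ℝ}

theorem hasDerivWithinAt_phaseWronskian (hx : IsErmakovSolOn u k x v s)
    (hy : IsOscillatorSolOn u y w s) (ht : t ∈ s) :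
    HasDerivWithinAt (phaseWronskian x v y w) (-(k * y t / x t ^ 3)) s t := by
  refine (((hx.hasDerivWithinAt_pos t ht).mul (hy.hasDerivWithinAt_vel t ht)).sub
    ((hx.hasDerivWithinAt_vel t ht).mul (hy.hasDerivWithinAt_pos t ht))).congr_deriv ?_
  ring

theorem hasDerivWithinAt_ermakovLewisForm (hx : IsErmakovSolOn u k x v s)
    (hy : IsOscillatorSolOn u y w s) (hz : IsOscillatorSolOn u z p s) (ht : t ∈ s) :
    HasDerivWithinAt (ermakovLewisForm k x v y w z p) 0 s t := by
  have hxt := hx.ne_zero t ht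
  have hWW := (hx.hasDerivWithinAt_phaseWronskian hy ht).mul
    (hx.hasDerivWithinAt_phaseWronskian hz ht)
  have hyz := ((hy.hasDerivWithinAt_pos t ht).mul (hz.hasDerivWithinAt_pos t ht)).div
    ((hx.hasDerivWithinAt_pos t ht).pow 2) (pow_ne_zero 2 hxt)
  refine (hWW.add (hyz.const_mul k)).congr_deriv ?_
  simp only [phaseWronskian, Pi.mul_apply, Pi.pow_apply]
  field_simp
  ring

theorem ermakovLewisForm_eq (hx : IsErmakovSolOn u k x v s) (hy : IsOscillatorSolOn u y w s)
    (hz : IsOscillatorSolOn u z p s) (hs : Convex ℝ s) (ha : a ∈ s) (hb : b ∈ s) :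
    ermakovLewisForm k x v y w z p b = ermakovLewisForm k x v y w z p a := by
  have hle := hs.norm_image_sub_le_of_norm_hasDerivWithin_le
    (fun t ht ↦ hx.hasDerivWithinAt_ermakovLewisForm hy hz ht) (fun _ _ ↦ norm_zero.le) ha hb
  rwa [zero_mul, norm_le_zero_iff, sub_eq_zero] at hle

theorem phaseWronskian_eq_zero (hx : IsErmakovSolOn u k x v s) (hy : IsOscillatorSolOn u y w s)
    (hz : IsOscillatorSolOn u z p s) (hs : Convex ℝ s) (ha : a ∈ s) (hb : b ∈ s)
    (hWa : phaseWronskian x v y w a = 0) (hza : z a = 0) (hyb : y b = 0) (hwb : w b ≠ 0) :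
    phaseWronskian x v z p b = 0 := by
  have hprod : phaseWronskian x v y w b * phaseWronskian x v z p b = 0 := by
    simpa [ermakovLewisForm, hWa, hza, hyb] using hx.ermakovLewisForm_eq hy hz hs ha hb
  have hWb : phaseWronskian x v y w b ≠ 0 := by
    simpa [phaseWronskian, hyb] using And.intro (hx.ne_zero b hb) hwb
  exact (mul_eq_zero_iff_left hWb).mp hprod

end IsErmakovSolOn

theorem isOscillatorSolOn_cos_sin (ω A B a : ℝ) (s : Set ℝ) :
    IsOscillatorSolOn (fun _ ↦ ω ^ 2)
      (fun t ↦ A * cos (ω * (t - a)) + B * sin (ω * (t - a)))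
      (fun t ↦ ω * (B * cos (ω * (t - a)) - A * sin (ω * (t - a)))) s := by
  have hphase (t : ℝ) : HasDerivWithinAt (fun t ↦ ω * (t - a)) ω s t := by
    simpa using ((hasDerivWithinAt_id t s).sub_const a).const_mul ω
  refine ⟨fun t _ ↦ ?_, fun t _ ↦ ?_⟩
  · refine (((hphase t).cos.const_mul A).add ((hphase t).sin.const_mul B)).congr_deriv ?_
    ring
  · refine ((((hphase t).cos.const_mul B).sub
      ((hphase t).sin.const_mul A)).const_mul ω).congr_deriv ?_
    ring

theorem mul_sin_eq_mul_cos_of_two_mul {A B θ : ℝ}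
    (hcos : cos (2 * θ) = (A ^ 2 - B ^ 2) / (A ^ 2 + B ^ 2))
    (hsin : sin (2 * θ) = 2 * A * B / (A ^ 2 + B ^ 2)) :
    A * sin θ = B * cos θ := by
  rcases eq_or_ne (A ^ 2 + B ^ 2) 0 with h0 | h0
  · obtain ⟨rfl, rfl⟩ : A = 0 ∧ B = 0 := by constructor <;> nlinarith
    simp
  rw [eq_div_iff h0, cos_two_mul'] at hcos
  rw [eq_div_iff h0, sin_two_mul] at hsin
  have hsq : (A * sin θ - B * cos θ) ^ 2 = 0 := by
    linear_combination (cos θ ^ 2 - sin θ ^ 2) / 2 * hcos + sin θ * cos θ * hsin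
      - (sin θ ^ 2 + cos θ ^ 2) * (A ^ 2 + B ^ 2) / 2 * sin_sq_add_cos_sq θ
  exact sub_eq_zero.mp (sq_eq_zero_iff.mp hsq)

theorem Y_segment_ratio_general {ω k a b : ℝ} {x v : ℝ → ℝ} {s : Set ℝ} (hω : ω ≠ 0)
    (hs : Convex ℝ s) (ha : a ∈ s) (hb : b ∈ s) (hx : IsErmakovSolOn (fun _ ↦ ω ^ 2) k x v s)
    (hcos : cos (2 * ω * (b - a))
      = (v a ^ 2 - ω ^ 2 * x a ^ 2) / (v a ^ 2 + ω ^ 2 * x a ^ 2))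
    (hsin : sin (2 * ω * (b - a)) = -2 * ω * x a * v a / (v a ^ 2 + ω ^ 2 * x a ^ 2)) :
    x a * v b = -v a * x b := by
  set θ := ω * (b - a)
  have hzero : v a * sin θ = -(ω * x a) * cos θ := by
    apply mul_sin_eq_mul_cos_of_two_mul
    · convert hcos using 2 <;> ring
    · convert hsin using 2 <;> ring
  have hne : (v a * cos θ - ω * x a * sin θ) * sin θ ≠ 0 := by
    have heq : (v a * cos θ - ω * x a * sin θ) * sin θ = -(ω * x a) := by
      linear_combination cos θ * hzero - ω * x a * sin_sq_add_cos_sq θ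
    rw [heq]
    exact neg_ne_zero.mpr (mul_ne_zero hω (hx.ne_zero a ha))
  obtain ⟨hvel, hsinθ⟩ := mul_ne_zero_iff.mp hne
  have hy := isOscillatorSolOn_cos_sin ω (ω * x a) (v a) a s
  have hz := isOscillatorSolOn_cos_sin ω 0 1 a s
  have hW := hx.phaseWronskian_eq_zero hy hz hs ha hb
    (hWa := by
      simp only [phaseWronskian, sub_self, mul_zero, cos_zero, mul_one, sin_zero, sub_zero,
        add_zero]
      ring)
    (hza := by simp)
    (hyb := by linear_combination hzero)
    (hwb := mul_ne_zero hω hvel)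
  have hprop : x b * (ω * cos θ) = v b * sin θ := by
    simpa [phaseWronskian, sub_eq_zero] using hW
  apply mul_right_cancel₀ hsinθ
  linear_combination x b * hzero - x a * hprop

/-- Along a Y-trajectory (ẋ₁ = x₂, ẋ₂ = −u₂x₁ + 1/x₁³) starting at a switching
point `(κ, μ)` and run for the inter-switching time `τ ∈ (0, π/√u₂)` determined
by `cos(2√u₂τ) = (μ² − u₂κ²)/(μ² + u₂κ²)` and
`sin(2√u₂τ) = −2√u₂κμ/(μ² + u₂κ²)`, the endpoint satisfies
`κ·x₂(τ) = −μ·x₁(τ)`: the coordinate ratio has constant magnitude and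
opposite sign. -/
theorem Y_segment_ratio
    (u₂ κ μ τ : ℝ) (hu₂ : 0 < u₂) (hκ : 0 < κ)
    (hτ : τ ∈ Set.Ioo 0 (π / Real.sqrt u₂))
    (hcos : Real.cos (2 * Real.sqrt u₂ * τ)
      = (μ ^ 2 - u₂ * κ ^ 2) / (μ ^ 2 + u₂ * κ ^ 2))
    (hsin : Real.sin (2 * Real.sqrt u₂ * τ)
      = -2 * Real.sqrt u₂ * κ * μ / (μ ^ 2 + u₂ * κ ^ 2))
    (x₁ x₂ : ℝ → ℝ)
    (hpos : ∀ t ∈ Set.Icc 0 τ, 0 < x₁ t)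
    (hinit₁ : x₁ 0 = κ) (hinit₂ : x₂ 0 = μ)
    (hd₁ : ∀ t ∈ Set.Icc 0 τ, HasDerivAt x₁ (x₂ t) t)
    (hd₂ : ∀ t ∈ Set.Icc 0 τ,
      HasDerivAt x₂ (-u₂ * x₁ t + 1 / (x₁ t) ^ 3) t) :
    κ * x₂ τ = -μ * x₁ τ := by
  have hsol : IsErmakovSolOn (fun _ ↦ √u₂ ^ 2) 1 x₁ x₂ (Set.Icc 0 τ) := by
    rw [sq_sqrt hu₂.le]
    exact ⟨fun t ht ↦ (hpos t ht).ne', fun t ht ↦ (hd₁ t ht).hasDerivWithinAt,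
      fun t ht ↦ (hd₂ t ht).hasDerivWithinAt⟩
  subst hinit₁ hinit₂
  exact Y_segment_ratio_general (sqrt_ne_zero'.mpr hu₂) (convex_Icc 0 τ)
    (Set.left_mem_Icc.mpr hτ.1.le) (Set.right_mem_Icc.mpr hτ.1.le) hsol
    (by rwa [sub_zero, sq_sqrt hu₂.le]) (by rwa [sub_zero, sq_sqrt hu₂.le])
end

section
/- Let u₁ > 0, κ > 0 and μ < 0 with μ² > u₁κ², and let (x₁,x₂) : [0,τ] → ℝ² solve ẋ₁ = x₂, ẋ₂ = u₁·x₁ + 1/x₁³ with x₁(t) > 0 for all t, x₁(0) = κ, x₂(0) = μ, where τ > 0 satisfies cosh(2√u₁τ) = (μ² + u₁κ²)/(μ² − u₁κ²) and sinh(2√u₁τ) = −2√u₁κμ/(μ² − u₁κ²). Then κ·x₂(τ) = −μ·x₁(τ); that is, the ratio of the coordinates of consecutive switching points joined by an X-segment has constant magnitude but opposite sign. -/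
open Real

/-!
An `X`-arc `ẍ = u x + c / x³` and the linear equation `ÿ = u y` share an Ermakov–Lewis invariant
`(y ẋ - ẏ x)² + c (y / x)²`. It is quadratic in `y`, so its polarisation at two solutions `y`, `z`
is conserved as well. Taking for `y` and `z` the solutions vanishing at the end and at the start of
the arc relates the endpoint data without integrating the nonlinear equation. By the half-angle
formula, the switching time is exactly the one for which `y` has the same logarithmic derivative as
`x` at the start; conservation then forces `z` to have the same logarithmic derivative as `x` at the
end, and these two logarithmic derivatives are opposite because `z` is, up to sign, the time
reversal of `y`.
-/

/-- The Ermakov–Lewis invariant of a solution `x` of `ẍ = u x + c / x³` with velocity `v`, polarised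
at two solutions `y`, `z` of the linear equation `ÿ = u y` with velocities `y'`, `z'`; the classical
invariant is the diagonal case `z = y`. Velocities are separate arguments, to be tied to the
positions by `HasDerivAt` hypotheses. -/
def polarLewisInvariant {𝕜 : Type*} [Field 𝕜] (c : 𝕜) (x v y y' z z' : 𝕜 → 𝕜) (t : 𝕜) : 𝕜 :=
  (y t * v t - y' t * x t) * (z t * v t - z' t * x t) + c * (y t * z t / x t ^ 2)

theorem hasDerivAt_polarLewisInvariant {𝕜 : Type*} [NontriviallyNormedField 𝕜]
    {c u t : 𝕜} {x v y y' z z' : 𝕜 → 𝕜} (hxt : x t ≠ 0)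
    (hx : HasDerivAt x (v t) t) (hv : HasDerivAt v (u * x t + c / x t ^ 3) t)
    (hy : HasDerivAt y (y' t) t) (hy' : HasDerivAt y' (u * y t) t)
    (hz : HasDerivAt z (z' t) t) (hz' : HasDerivAt z' (u * z t) t) :
    HasDerivAt (polarLewisInvariant c x v y y' z z') 0 t := by
  -- The linear forces cancel in the Wronskian, leaving only the inverse-cube force.
  have hasDerivAt_wronskian {w w' : 𝕜 → 𝕜} (hw : HasDerivAt w (w' t) t)
      (hw' : HasDerivAt w' (u * w t) t) :
      HasDerivAt (fun r ↦ w r * v r - w' r * x r) (c * w t / x t ^ 3) t :=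
    ((hw.mul hv).sub (hw'.mul hx)).congr_deriv (by ring)
  have hquot : HasDerivAt (fun r ↦ y r * z r / x r ^ 2)
      (((y' t * z t + y t * z' t) * x t - 2 * (y t * z t * v t)) / x t ^ 3) t :=
    ((hy.mul hz).div (hx.pow 2) (pow_ne_zero 2 hxt)).congr_deriv (by
      simp only [Pi.mul_apply, Pi.pow_apply]
      field_simp
      ring)
  refine (((hasDerivAt_wronskian hy hy').mul (hasDerivAt_wronskian hz hz')).add
    (hquot.const_mul c)).congr_deriv ?_
  field_simp
  ring

theorem hasDerivAt_sinh_mul_sub (s a t : ℝ) :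
    HasDerivAt (fun r ↦ sinh (s * (r - a))) (s * cosh (s * (t - a))) t :=
  (((hasDerivAt_id t).sub_const a).const_mul s).sinh.congr_deriv (by simp only [id]; ring)

theorem hasDerivAt_mul_cosh_mul_sub (s a t : ℝ) :
    HasDerivAt (fun r ↦ s * cosh (s * (r - a))) (s ^ 2 * sinh (s * (t - a))) t :=
  ((((hasDerivAt_id t).sub_const a).const_mul s).cosh.const_mul s).congr_deriv
    (by simp only [id]; ring)

theorem ermakov_endpoint_relation {s c a b : ℝ} {x v : ℝ → ℝ} (hs : s ≠ 0) (hab : a ≤ b)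
    (hx₀ : ∀ t ∈ Set.Icc a b, x t ≠ 0)
    (hx : ∀ t ∈ Set.Icc a b, HasDerivAt x (v t) t)
    (hv : ∀ t ∈ Set.Icc a b, HasDerivAt v (s ^ 2 * x t + c / x t ^ 3) t) :
    x b * (sinh (s * (b - a)) * v b - s * cosh (s * (b - a)) * x b) =
      -(x a * (sinh (s * (b - a)) * v a + s * cosh (s * (b - a)) * x a)) := by
  let I : ℝ → ℝ := polarLewisInvariant c x v
    (fun t ↦ sinh (s * (t - b))) (fun t ↦ s * cosh (s * (t - b)))
    (fun t ↦ sinh (s * (t - a))) (fun t ↦ s * cosh (s * (t - a)))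
  have hI (t : ℝ) (ht : t ∈ Set.Icc a b) : HasDerivAt I 0 t :=
    hasDerivAt_polarLewisInvariant (hx₀ t ht) (hx t ht) (hv t ht)
      (hasDerivAt_sinh_mul_sub s b t) (hasDerivAt_mul_cosh_mul_sub s b t)
      (hasDerivAt_sinh_mul_sub s a t) (hasDerivAt_mul_cosh_mul_sub s a t)
  have hconst : I b = I a :=
    constant_of_has_deriv_right_zero (fun t ht ↦ (hI t ht).continuousAt.continuousWithinAt)
      (fun t ht ↦ (hI t (Set.Ico_subset_Icc_self ht)).hasDerivWithinAt) b (Set.right_mem_Icc.2 hab)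
  have hIb : I b = -s * (x b * (sinh (s * (b - a)) * v b - s * cosh (s * (b - a)) * x b)) := by
    simp only [I, polarLewisInvariant, sub_self, mul_zero, sinh_zero, cosh_zero]
    ring
  have hIa : I a = s * (x a * (sinh (s * (b - a)) * v a + s * cosh (s * (b - a)) * x a)) := by
    have hneg : s * (a - b) = -(s * (b - a)) := by ring
    simp only [I, polarLewisInvariant, sub_self, mul_zero, sinh_zero, cosh_zero, hneg, sinh_neg,
      cosh_neg]
    ring
  apply mul_left_cancel₀ hs
  linear_combination hIb - hIa - hconst

theorem mul_sinh_two_mul_eq_mul_cosh_two_mul_add_one_iff {m n θ : ℝ} :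
    m * sinh (2 * θ) = n * (cosh (2 * θ) + 1) ↔ m * sinh θ = n * cosh θ := by
  have hcosh : 2 * cosh θ ≠ 0 := mul_ne_zero two_ne_zero (cosh_pos θ).ne'
  have hleft : m * sinh (2 * θ) = 2 * cosh θ * (m * sinh θ) := by
    rw [sinh_two_mul]
    ring
  have hright : n * (cosh (2 * θ) + 1) = 2 * cosh θ * (n * cosh θ) := by
    rw [cosh_two_mul, sinh_sq]
    ring
  rw [hleft, hright, mul_right_inj' hcosh]

/-- Along an X-trajectory (ẋ₁ = x₂, ẋ₂ = u₁x₁ + 1/x₁³) starting at a switching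
point `(κ, μ)` with `κ > 0`, `μ < 0`, `μ² > u₁κ²`, run for the inter-switching
time `τ > 0` determined by `cosh(2√u₁τ) = (μ² + u₁κ²)/(μ² − u₁κ²)` and
`sinh(2√u₁τ) = −2√u₁κμ/(μ² − u₁κ²)`, the endpoint satisfies
`κ·x₂(τ) = −μ·x₁(τ)`: the coordinate ratio has constant magnitude and
opposite sign. -/
theorem X_segment_ratio
    (u₁ κ μ τ : ℝ) (hu₁ : 0 < u₁) (hκ : 0 < κ) (hμ : μ < 0)
    (hratio : u₁ * κ ^ 2 < μ ^ 2) (hτ : 0 < τ)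
    (hcosh : Real.cosh (2 * Real.sqrt u₁ * τ)
      = (μ ^ 2 + u₁ * κ ^ 2) / (μ ^ 2 - u₁ * κ ^ 2))
    (hsinh : Real.sinh (2 * Real.sqrt u₁ * τ)
      = -2 * Real.sqrt u₁ * κ * μ / (μ ^ 2 - u₁ * κ ^ 2))
    (x₁ x₂ : ℝ → ℝ)
    (hpos : ∀ t ∈ Set.Icc 0 τ, 0 < x₁ t)
    (hinit₁ : x₁ 0 = κ) (hinit₂ : x₂ 0 = μ)
    (hd₁ : ∀ t ∈ Set.Icc 0 τ, HasDerivAt x₁ (x₂ t) t)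
    (hd₂ : ∀ t ∈ Set.Icc 0 τ,
      HasDerivAt x₂ (u₁ * x₁ t + 1 / (x₁ t) ^ 3) t) :
    κ * x₂ τ = -μ * x₁ τ := by
  set s := √u₁
  have hs : 0 < s := sqrt_pos.2 hu₁
  have hs_sq : s ^ 2 = u₁ := sq_sqrt hu₁.le
  have hstart : μ * sinh (s * τ) = -(s * κ) * cosh (s * τ) := by
    have hden : μ ^ 2 - u₁ * κ ^ 2 ≠ 0 := (sub_pos.2 hratio).ne'
    rw [← mul_sinh_two_mul_eq_mul_cosh_two_mul_add_one_iff, ← mul_assoc 2, hcosh, hsinh,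
      div_add_one hden]
    ring
  have hrel : x₁ τ * (sinh (s * τ) * x₂ τ - s * cosh (s * τ) * x₁ τ) =
      -(κ * (sinh (s * τ) * μ + s * cosh (s * τ) * κ)) := by
    simpa only [sub_zero, hinit₁, hinit₂] using
      ermakov_endpoint_relation hs.ne' hτ.le (fun t ht ↦ (hpos t ht).ne') hd₁ (hs_sq ▸ hd₂)
  have hend : sinh (s * τ) * x₂ τ = s * cosh (s * τ) * x₁ τ := by
    apply mul_left_cancel₀ (hpos τ (Set.right_mem_Icc.2 hτ.le)).ne'
    linear_combination hrel - κ * hstart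
  apply mul_left_cancel₀ (sinh_pos_iff.2 (mul_pos hs hτ)).ne'
  linear_combination κ * hend + x₁ τ * hstart
end

section
/- Let u₁ > 0, u₂ ≥ 1 and γ > 1. Then there exists a unique pair (κ, μ) with κ > 0 and μ > 0 satisfying μ² − u₁κ² + 1/κ² = 1 − u₁ and μ² + u₂κ² + 1/κ² = u₂γ² + 1/γ², and it is given by κ² = (u₂γ⁴ + 1 + γ²(u₁ − 1))/(γ²(u₁ + u₂)); moreover 1 < κ² < γ². (This (κ,μ) is the unique switching point of the one-switching XY trajectory from (1,0) to (γ,0).) -/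
/-!
Write `V u r = u * r + 1 / r`, so that both first integrals have the form `x₂² + V u (x₁²)`, with
`u = v := -u₁` on X-curves and `u = w := u₂` on Y-curves. Subtracting the two curve equations
eliminates `x₂` and leaves a linear equation for `x₁²`. Its solution `S` satisfies
`(w - v) * (S - s) = V w t - V w s` and `(w - v) * (t - S) = V v s - V v t`,
where `s` and `t` are the squared abscissas of the endpoints, and the squared ordinate at the
crossing is `V v s - V v S`. The identity `V u y - V u x = (y - x) * (u - 1 / (x * y))` makes all
three differences positive as soon as `v < 1 / (s * t) < w`.
-/

/-- The potential part `u x² + 1/x²` of the first integral of the Ermakov equation with constant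
control `u`, as a function of `s = x²`. -/
noncomputable def ermakovPotential (u s : ℝ) : ℝ :=
  u * s + 1 / s

/-- The first integral `x₂² + u x₁² + 1/x₁²` of the Ermakov equation with constant control `u`.
The control is signed: the X-curves of the paper are the level sets for `u = -u₁`. -/
noncomputable def ermakovIntegral (u : ℝ) (p : ℝ × ℝ) : ℝ :=
  p.2 ^ 2 + ermakovPotential u (p.1 ^ 2)

/-- `p` is a point of the open first quadrant where a trajectory from `(a, 0)` to `(b, 0)` can
switch from the control `v` to the control `w`, i.e. where the `v`-curve through `(a, 0)` meets the
`w`-curve through `(b, 0)`. -/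
def IsSwitchingPoint (v w a b : ℝ) (p : ℝ × ℝ) : Prop :=
  0 < p.1 ∧ 0 < p.2 ∧ ermakovIntegral v p = ermakovIntegral v (a, 0) ∧
    ermakovIntegral w p = ermakovIntegral w (b, 0)

/-- The squared abscissa of the switching point from control `v` to control `w`, in terms of the
squared abscissas `s` and `t` of the two endpoints. -/
noncomputable def switchingAbscissaSq (v w s t : ℝ) : ℝ :=
  (ermakovPotential w t - ermakovPotential v s) / (w - v)

section

variable {u v w s t x y a b c d : ℝ}

theorem ermakovPotential_sub_left (v w s : ℝ) :
    ermakovPotential w s - ermakovPotential v s = (w - v) * s := by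
  unfold ermakovPotential
  ring

theorem ermakovPotential_sub_right (hx : x ≠ 0) (hy : y ≠ 0) :
    ermakovPotential u y - ermakovPotential u x = (y - x) * (u - 1 / (x * y)) := by
  unfold ermakovPotential
  field_simp
  ring

theorem ermakovPotential_lt_of_one_div_lt (hx : 0 < x) (hxy : x < y) (hu : 1 / (x * y) < u) :
    ermakovPotential u x < ermakovPotential u y := by
  rw [← sub_pos, ermakovPotential_sub_right hx.ne' (hx.trans hxy).ne']
  exact mul_pos (sub_pos.2 hxy) (sub_pos.2 hu)

theorem ermakovPotential_lt_of_lt_one_div (hx : 0 < x) (hxy : x < y) (hu : u < 1 / (x * y)) :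
    ermakovPotential u y < ermakovPotential u x := by
  rw [← sub_neg, ermakovPotential_sub_right hx.ne' (hx.trans hxy).ne']
  exact mul_neg_of_pos_of_neg (sub_pos.2 hxy) (sub_neg.2 hu)

theorem ermakovIntegral_mk_zero (u a : ℝ) :
    ermakovIntegral u (a, 0) = ermakovPotential u (a ^ 2) := by
  simp [ermakovIntegral]

theorem ermakovIntegral_sub (v w : ℝ) (p : ℝ × ℝ) :
    ermakovIntegral w p - ermakovIntegral v p = (w - v) * p.1 ^ 2 := by
  rw [ermakovIntegral, ermakovIntegral, add_sub_add_left_eq_sub, ermakovPotential_sub_left]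

theorem ermakovIntegral_eq_and_eq_iff (hvw : v ≠ w) (p : ℝ × ℝ) :
    ermakovIntegral v p = c ∧ ermakovIntegral w p = d ↔
      p.1 ^ 2 = (d - c) / (w - v) ∧
        p.2 ^ 2 = c - ermakovPotential v ((d - c) / (w - v)) := by
  have hsq : p.1 ^ 2 = (d - c) / (w - v) ↔
      ermakovIntegral w p - ermakovIntegral v p = d - c := by
    rw [ermakovIntegral_sub, eq_div_iff (sub_ne_zero.2 hvw.symm), mul_comm]
  constructor
  · rintro ⟨hv, hw⟩
    have hp := hsq.2 (by rw [hv, hw])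
    exact ⟨hp, by rw [← hp]; exact eq_sub_of_add_eq hv⟩
  · rintro ⟨hp, hord⟩
    have hv : ermakovIntegral v p = c := by rw [ermakovIntegral, hp, hord, sub_add_cancel]
    have hdiff := hsq.1 hp
    exact ⟨hv, by linarith⟩

theorem isSwitchingPoint_iff (hvw : v ≠ w) (p : ℝ × ℝ) :
    IsSwitchingPoint v w a b p ↔
      0 < p.1 ∧ 0 < p.2 ∧ p.1 ^ 2 = switchingAbscissaSq v w (a ^ 2) (b ^ 2) ∧
        p.2 ^ 2 = ermakovPotential v (a ^ 2) -
          ermakovPotential v (switchingAbscissaSq v w (a ^ 2) (b ^ 2)) := by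
  simp only [IsSwitchingPoint, ermakovIntegral_mk_zero, ermakovIntegral_eq_and_eq_iff hvw,
    switchingAbscissaSq]

theorem lt_switchingAbscissaSq (hvw : v < w) (hs : 0 < s) (hst : s < t)
    (hw : 1 / (s * t) < w) : s < switchingAbscissaSq v w s t := by
  have hV : ermakovPotential w s < ermakovPotential w t :=
    ermakovPotential_lt_of_one_div_lt hs hst hw
  rw [switchingAbscissaSq, lt_div_iff₀' (sub_pos.2 hvw), ← ermakovPotential_sub_left]
  exact sub_lt_sub_right hV _

theorem switchingAbscissaSq_lt (hvw : v < w) (hs : 0 < s) (hst : s < t)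
    (hv : v < 1 / (s * t)) : switchingAbscissaSq v w s t < t := by
  have hV : ermakovPotential v t < ermakovPotential v s :=
    ermakovPotential_lt_of_lt_one_div hs hst hv
  rw [switchingAbscissaSq, div_lt_iff₀' (sub_pos.2 hvw), ← ermakovPotential_sub_left]
  exact sub_lt_sub_left hV _

theorem ermakovPotential_switchingAbscissaSq_lt (hs : 0 < s) (hst : s < t)
    (hv : v < 1 / (s * t)) (hw : 1 / (s * t) < w) :
    ermakovPotential v (switchingAbscissaSq v w s t) < ermakovPotential v s := by
  have hlt := lt_switchingAbscissaSq (hv.trans hw) hs hst hw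
  have hgt := switchingAbscissaSq_lt (hv.trans hw) hs hst hv
  have hpos := hs.trans hlt
  refine ermakovPotential_lt_of_lt_one_div hs hlt (hv.trans ?_)
  gcongr

theorem existsUnique_pos_sq_eq (hs : 0 < s) (ht : 0 < t) :
    ∃! p : ℝ × ℝ, 0 < p.1 ∧ 0 < p.2 ∧ p.1 ^ 2 = s ∧ p.2 ^ 2 = t := by
  refine ⟨(√s, √t), ⟨Real.sqrt_pos.2 hs, Real.sqrt_pos.2 ht, Real.sq_sqrt hs.le,
    Real.sq_sqrt ht.le⟩, ?_⟩
  rintro ⟨x, y⟩ ⟨hx, hy, rfl, rfl⟩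
  rw [Real.sqrt_sq hx.le, Real.sqrt_sq hy.le]

theorem one_switching_point_general (ha : 0 < a) (hab : a < b)
    (hv : v < 1 / (a ^ 2 * b ^ 2)) (hw : 1 / (a ^ 2 * b ^ 2) < w) :
    (∃! p : ℝ × ℝ, IsSwitchingPoint v w a b p) ∧
      ∀ κ μ : ℝ, IsSwitchingPoint v w a b (κ, μ) →
        κ ^ 2 = switchingAbscissaSq v w (a ^ 2) (b ^ 2) ∧ a ^ 2 < κ ^ 2 ∧ κ ^ 2 < b ^ 2 := by
  have hvw : v < w := hv.trans hw
  have ha2 : 0 < a ^ 2 := by positivity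
  have hab2 : a ^ 2 < b ^ 2 := by gcongr
  have hlt := lt_switchingAbscissaSq hvw ha2 hab2 hw
  have hgt := switchingAbscissaSq_lt hvw ha2 hab2 hv
  have hord := ermakovPotential_switchingAbscissaSq_lt ha2 hab2 hv hw
  simp only [isSwitchingPoint_iff hvw.ne]
  refine ⟨existsUnique_pos_sq_eq (ha2.trans hlt) (sub_pos.2 hord), ?_⟩
  rintro κ μ ⟨-, -, hκ, -⟩
  exact ⟨hκ, hκ ▸ hlt, hκ ▸ hgt⟩

end

theorem isSwitchingPoint_neg_one_iff (u₁ u₂ γ : ℝ) (p : ℝ × ℝ) :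
    IsSwitchingPoint (-u₁) u₂ 1 γ p ↔ 0 < p.1 ∧ 0 < p.2 ∧
      p.2 ^ 2 - u₁ * p.1 ^ 2 + 1 / p.1 ^ 2 = 1 - u₁ ∧
      p.2 ^ 2 + u₂ * p.1 ^ 2 + 1 / p.1 ^ 2 = u₂ * γ ^ 2 + 1 / γ ^ 2 := by
  simp only [IsSwitchingPoint, ermakovIntegral, ermakovPotential]
  ring_nf

theorem switchingAbscissaSq_neg_one (u₁ u₂ : ℝ) {γ : ℝ} (hγ : γ ≠ 0) :
    switchingAbscissaSq (-u₁) u₂ 1 (γ ^ 2) =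
      (u₂ * γ ^ 4 + 1 + γ ^ 2 * (u₁ - 1)) / (γ ^ 2 * (u₁ + u₂)) := by
  rw [switchingAbscissaSq, ← mul_div_mul_left _ _ (pow_ne_zero 2 hγ)]
  unfold ermakovPotential
  congr 1
  · field_simp
    ring
  · ring

/-- The one-switching `XY` trajectory from `(1,0)` to `(γ,0)` has a unique
switching point `(κ, μ)` in the open upper half plane, lying on the X-curve
through `(1,0)` and the Y-curve through `(γ,0)`; its abscissa satisfies
`κ² = (u₂γ⁴ + 1 + γ²(u₁ − 1))/(γ²(u₁ + u₂))` and `1 < κ² < γ²`. -/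
theorem one_switching_point
    (u₁ u₂ γ : ℝ) (hu₁ : 0 < u₁) (hu₂ : 1 ≤ u₂) (hγ : 1 < γ) :
    (∃! p : ℝ × ℝ, 0 < p.1 ∧ 0 < p.2 ∧
      p.2 ^ 2 - u₁ * p.1 ^ 2 + 1 / p.1 ^ 2 = 1 - u₁ ∧
      p.2 ^ 2 + u₂ * p.1 ^ 2 + 1 / p.1 ^ 2 = u₂ * γ ^ 2 + 1 / γ ^ 2) ∧
    (∀ κ μ : ℝ, 0 < κ → 0 < μ →
      μ ^ 2 - u₁ * κ ^ 2 + 1 / κ ^ 2 = 1 - u₁ →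
      μ ^ 2 + u₂ * κ ^ 2 + 1 / κ ^ 2 = u₂ * γ ^ 2 + 1 / γ ^ 2 →
      κ ^ 2 = (u₂ * γ ^ 4 + 1 + γ ^ 2 * (u₁ - 1)) / (γ ^ 2 * (u₁ + u₂)) ∧
      1 < κ ^ 2 ∧ κ ^ 2 < γ ^ 2) := by
  have hX : -u₁ < 1 / (1 ^ 2 * γ ^ 2) := (neg_lt_zero.2 hu₁).trans (by positivity)
  have hY : 1 / (1 ^ 2 * γ ^ 2) < u₂ := by
    simpa using (inv_lt_one_of_one_lt₀ (one_lt_pow₀ hγ two_ne_zero)).trans_le hu₂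
  simpa only [isSwitchingPoint_neg_one_iff, switchingAbscissaSq_neg_one u₁ u₂
    (one_pos.trans hγ).ne', and_imp, one_pow] using one_switching_point_general one_pos hγ hX hY
end

section
/- Let n ≥ 1 be an integer, u₁, u₂ > 0, and 0 < c₁ ≤ c₂. Then there is at most one real s with u₁ < s and 4(s + u₂) ≤ c₁² satisfying the transcendental equation (c₁ + √(c₁² − 4(s + u₂)))/(c₂ + √(c₂² − 4(s + u₂))) = ((s − u₁)/(s + u₂))ⁿ; indeed the left-hand side is a nonincreasing function of s while the right-hand side is strictly increasing on (u₁, ∞). -/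
open Real

/-!
For `x < y ≤ c²`, rationalising the numerator gives
`(c + √(c² - y)) / (c + √(c² - x)) = 1 - (y - x) / ((√(c² - x) + √(c² - y)) (c + √(c² - x)))`,
which visibly increases with `c ≥ 0`. Comparing `c₁ ≤ c₂` and cross-multiplying, the quotient
`(c₁ + √(c₁² - x)) / (c₂ + √(c₂² - x))` decreases with `x`. On the other side,
`(s - u₁) / (s + u₂) = 1 - (u₁ + u₂) / (s + u₂)` strictly increases with `s`, so the two sides of
the equation meet at most once.
-/

open Set

theorem subsingleton_setOf_eq_of_antitoneOn_of_strictMonoOn {α β : Type*} [LinearOrder α]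
    [Preorder β] {f g : α → β} {S : Set α} (hf : AntitoneOn f S) (hg : StrictMonoOn g S) :
    {s ∈ S | f s = g s}.Subsingleton := by
  have no_lt : ∀ s ∈ {s ∈ S | f s = g s}, ∀ t ∈ {s ∈ S | f s = g s}, ¬ s < t := by
    rintro s ⟨hs, hfgs⟩ t ⟨ht, hfgt⟩ hst
    have : g t < g t := calc
      g t = f t := hfgt.symm
      _ ≤ f s := hf hs ht hst.le
      _ = g s := hfgs
      _ < g t := hg hs ht hst
    exact this.false
  exact fun s hs t ht => le_antisymm (not_lt.1 (no_lt t ht s hs)) (not_lt.1 (no_lt s hs t ht))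

theorem add_sqrt_div_add_sqrt_eq_one_sub {a b c : ℝ} (ha : 0 < a) (hb : 0 ≤ b)
    (hca : c + √a ≠ 0) :
    (c + √b) / (c + √a) = 1 - (a - b) / ((√a + √b) * (c + √a)) := by
  have hab : √a + √b ≠ 0 := by positivity
  have conj : a - b = (√a - √b) * (√a + √b) := by
    rw [mul_comm, ← sq_sub_sq, sq_sqrt ha.le, sq_sqrt hb]
  rw [conj]
  field_simp
  ring

theorem monotoneOn_add_sqrt_sq_sub_div {x y : ℝ} (hxy : x < y) :
    MonotoneOn (fun c => (c + √(c ^ 2 - y)) / (c + √(c ^ 2 - x))) {c | 0 ≤ c ∧ y ≤ c ^ 2} := by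
  rintro c ⟨hc, hyc⟩ d ⟨hd, hyd⟩ hcd
  have hxc : 0 < c ^ 2 - x := by linarith
  have hxd : 0 < d ^ 2 - x := by linarith
  have : 0 ≤ y - x := sub_nonneg.2 hxy.le
  have rationalised : ∀ e, 0 ≤ e → 0 < e ^ 2 - x → y ≤ e ^ 2 →
      (e + √(e ^ 2 - y)) / (e + √(e ^ 2 - x)) =
        1 - (y - x) / ((√(e ^ 2 - x) + √(e ^ 2 - y)) * (e + √(e ^ 2 - x))) := by
    intro e he hxe hye
    rw [add_sqrt_div_add_sqrt_eq_one_sub hxe (sub_nonneg.2 hye) (by positivity),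
      sub_sub_sub_cancel_left]
  simp only [rationalised c hc hxc hyc, rationalised d hd hxd hyd]
  gcongr

theorem antitoneOn_add_sqrt_sq_sub_div {c₁ c₂ : ℝ} (hc₁ : 0 < c₁) (hc : c₁ ≤ c₂) :
    AntitoneOn (fun x => (c₁ + √(c₁ ^ 2 - x)) / (c₂ + √(c₂ ^ 2 - x))) (Iic (c₁ ^ 2)) := by
  intro x _ y hy hxy
  obtain rfl | hlt := hxy.eq_or_lt
  · rfl
  have hc₂ : 0 < c₂ := hc₁.trans_le hc
  have hyc₂ : y ≤ c₂ ^ 2 := le_trans hy (by gcongr)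
  have ratio_le : (c₁ + √(c₁ ^ 2 - y)) / (c₁ + √(c₁ ^ 2 - x)) ≤
      (c₂ + √(c₂ ^ 2 - y)) / (c₂ + √(c₂ ^ 2 - x)) :=
    monotoneOn_add_sqrt_sq_sub_div hlt ⟨hc₁.le, hy⟩ ⟨hc₂.le, hyc₂⟩ hc
  rw [div_le_div_iff₀ (by positivity) (by positivity)] at ratio_le ⊢
  linarith

theorem strictMonoOn_sub_div_add {K : Type*} [Field K] [LinearOrder K] [IsStrictOrderedRing K]
    {a b : K} (hab : 0 < a + b) : StrictMonoOn (fun s => (s - a) / (s + b)) (Ioi (-b)) := by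
  have eq_one_sub : ∀ s ∈ Ioi (-b), (s - a) / (s + b) = 1 - (a + b) / (s + b) := by
    intro s hs
    have : s + b ≠ 0 := (neg_lt_iff_pos_add.1 hs).ne'
    field_simp
    ring
  intro s hs t ht hst
  have hsb : 0 < s + b := neg_lt_iff_pos_add.1 hs
  simp only [eq_one_sub s hs, eq_one_sub t ht]
  gcongr

theorem strictMonoOn_sub_div_add_pow {K : Type*} [Field K] [LinearOrder K]
    [IsStrictOrderedRing K] {a b : K} (hab : 0 < a + b) {n : ℕ} (hn : n ≠ 0) :
    StrictMonoOn (fun s => ((s - a) / (s + b)) ^ n) (Ici a) := by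
  have pos_add : ∀ s ∈ Ici a, 0 < s + b := fun s hs => hab.trans_le (by gcongr; exact hs)
  intro s hs t ht hst
  have base_nonneg : 0 ≤ (s - a) / (s + b) := div_nonneg (sub_nonneg.2 hs) (pos_add s hs).le
  have base_lt : (s - a) / (s + b) < (t - a) / (t + b) :=
    strictMonoOn_sub_div_add hab (neg_lt_iff_pos_add.2 (pos_add s hs))
      (neg_lt_iff_pos_add.2 (pos_add t ht)) hst
  exact pow_lt_pow_left₀ base_lt base_nonneg hn

theorem transcendental_unique_general {n : ℕ} (hn : n ≠ 0) {u₁ u₂ c₁ c₂ : ℝ}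
    (hu : 0 < u₁ + u₂) (hc₁ : 0 < c₁) (hc : c₁ ≤ c₂) :
    {s ∈ Ici u₁ ∩ {s | 4 * (s + u₂) ≤ c₁ ^ 2} |
      (c₁ + √(c₁ ^ 2 - 4 * (s + u₂))) / (c₂ + √(c₂ ^ 2 - 4 * (s + u₂))) =
        ((s - u₁) / (s + u₂)) ^ n}.Subsingleton ∧
    AntitoneOn
      (fun s => (c₁ + √(c₁ ^ 2 - 4 * (s + u₂))) / (c₂ + √(c₂ ^ 2 - 4 * (s + u₂))))
      {s | 4 * (s + u₂) ≤ c₁ ^ 2} ∧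
    StrictMonoOn (fun s => ((s - u₁) / (s + u₂)) ^ n) (Ici u₁) := by
  have lhs_anti : AntitoneOn
      (fun s => (c₁ + √(c₁ ^ 2 - 4 * (s + u₂))) / (c₂ + √(c₂ ^ 2 - 4 * (s + u₂))))
      {s | 4 * (s + u₂) ≤ c₁ ^ 2} :=
    fun s hs t ht hst => antitoneOn_add_sqrt_sq_sub_div hc₁ hc hs ht (by gcongr)
  have rhs_mono := strictMonoOn_sub_div_add_pow hu hn
  exact ⟨subsingleton_setOf_eq_of_antitoneOn_of_strictMonoOn
    (lhs_anti.mono inter_subset_right) (rhs_mono.mono inter_subset_left), lhs_anti, rhs_mono⟩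

/-- The transcendental equation
`(c₁ + √(c₁² − 4(s+u₂)))/(c₂ + √(c₂² − 4(s+u₂))) = ((s − u₁)/(s + u₂))ⁿ`
has at most one solution `s` with `u₁ < s` and `4(s + u₂) ≤ c₁²`: the
left-hand side is nonincreasing in `s` on that range while the right-hand side
is strictly increasing on `(u₁, ∞)`. -/
theorem transcendental_unique
    (n : ℕ) (hn : 1 ≤ n) (u₁ u₂ c₁ c₂ : ℝ)
    (hu₁ : 0 < u₁) (hu₂ : 0 < u₂) (hc₁ : 0 < c₁) (hc : c₁ ≤ c₂) :
    (∀ s t : ℝ, u₁ < s → 4 * (s + u₂) ≤ c₁ ^ 2 →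
      u₁ < t → 4 * (t + u₂) ≤ c₁ ^ 2 →
      (c₁ + Real.sqrt (c₁ ^ 2 - 4 * (s + u₂)))
          / (c₂ + Real.sqrt (c₂ ^ 2 - 4 * (s + u₂)))
        = ((s - u₁) / (s + u₂)) ^ n →
      (c₁ + Real.sqrt (c₁ ^ 2 - 4 * (t + u₂)))
          / (c₂ + Real.sqrt (c₂ ^ 2 - 4 * (t + u₂)))
        = ((t - u₁) / (t + u₂)) ^ n →
      s = t) ∧
    (∀ s t : ℝ, u₁ < s → s < t → 4 * (t + u₂) ≤ c₁ ^ 2 →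
      (c₁ + Real.sqrt (c₁ ^ 2 - 4 * (t + u₂)))
          / (c₂ + Real.sqrt (c₂ ^ 2 - 4 * (t + u₂)))
        ≤ (c₁ + Real.sqrt (c₁ ^ 2 - 4 * (s + u₂)))
          / (c₂ + Real.sqrt (c₂ ^ 2 - 4 * (s + u₂)))) ∧
    (∀ s t : ℝ, u₁ < s → s < t →
      ((s - u₁) / (s + u₂)) ^ n < ((t - u₁) / (t + u₂)) ^ n) := by
  obtain ⟨unique, lhs_anti, rhs_mono⟩ :=
    transcendental_unique_general (Nat.one_le_iff_ne_zero.1 hn) (add_pos hu₁ hu₂) hc₁ hc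
  exact ⟨fun s t hs hs' ht ht' es et => unique ⟨⟨hs.le, hs'⟩, es⟩ ⟨⟨ht.le, ht'⟩, et⟩,
    fun s t _ hst ht => lhs_anti (le_trans (by gcongr) ht) ht hst.le,
    fun s t hs hst => rhs_mono hs.le (hs.trans hst).le hst⟩
end

section
/- For every γ > 1, arsinh((γ² − 1)/(2γ)) = ln γ. Consequently, for u₁ = u₂ = 1 the one-switching transfer time from (1,0) to (γ,0) equals T₀(γ) = arsinh(√((γ² − 1)(γ² − 1)/(4γ²))) + arcsin(√((γ² − 1)(γ² + 1)/(2(γ⁴ − 1)))) = ln γ + π/4, so T₀(γ)/ln γ → 1 as γ → ∞: the cooling time diverges logarithmically as the target temperature approaches absolute zero, exhibiting the unattainability principle of the third law of thermodynamics. -/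
open Real Filter

/-!
Since `sinh (log γ) = (γ² − 1)/(2γ)`, the hyperbolic arc takes time exactly `log γ`. In the
trigonometric term `γ⁴ − 1 = (γ² − 1)(γ² + 1)` cancels, so that arc takes the constant time
`arcsin √(1/2) = π/4`, which is negligible against `log γ`.
-/

theorem arsinh_sq_sub_one_div_two_mul {x : ℝ} (hx : 0 < x) :
    arsinh ((x ^ 2 - 1) / (2 * x)) = log x := by
  have sinh_log_eq : sinh (log x) = (x ^ 2 - 1) / (2 * x) := by
    rw [sinh_log hx]
    field_simp
  rw [← sinh_log_eq, arsinh_sinh]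

theorem arcsin_sqrt_one_half : arcsin √(1 / 2) = π / 4 := by
  refine arcsin_eq_of_sin_eq ?_ ⟨by linarith [pi_pos], by linarith [pi_pos]⟩
  rw [sin_pi_div_four, sqrt_div zero_le_one, sqrt_one, sqrt_div_self']

theorem tendsto_add_const_div_self {α 𝕜 : Type*} [Field 𝕜] [LinearOrder 𝕜]
    [IsStrictOrderedRing 𝕜] [TopologicalSpace 𝕜] [OrderTopology 𝕜] {l : Filter α} {f : α → 𝕜}
    (hf : Tendsto f l atTop) (c : 𝕜) : Tendsto (fun x => (f x + c) / f x) l (nhds 1) := by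
  have tendsto_one_add : Tendsto (fun x => 1 + c / f x) l (nhds 1) := by
    simpa using (hf.const_div_atTop c).const_add 1
  refine tendsto_one_add.congr' ?_
  filter_upwards [hf.eventually_ne_atTop 0] with x hx
  rw [add_div, div_self hx]

/-- The time spent on the hyperbolic arc (control `u = −1`) of the one-switching transfer from
`(1, 0)` to `(γ, 0)`: the `arsinh` term of `T₀` at `u₁ = u₂ = 1`, with its factor `1/√u₁ = 1`
omitted. -/
noncomputable def hyperbolicArcTime (γ : ℝ) : ℝ :=
  arsinh √((γ ^ 2 - 1) * (γ ^ 2 - 1) / (4 * γ ^ 2))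

/-- The time spent on the trigonometric arc (control `u = 1`) of the one-switching transfer from
`(1, 0)` to `(γ, 0)`: the `arcsin` term of `T₀` at `u₁ = u₂ = 1`, with its factor `1/√u₂ = 1`
omitted. -/
noncomputable def trigonometricArcTime (γ : ℝ) : ℝ :=
  arcsin √((γ ^ 2 - 1) * (γ ^ 2 + 1) / (2 * (γ ^ 4 - 1)))

/-- The one-switching transfer time `T₀` from `(1, 0)` to `(γ, 0)` for `u₁ = u₂ = 1`. -/
noncomputable def transferTime (γ : ℝ) : ℝ :=
  hyperbolicArcTime γ + trigonometricArcTime γ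

theorem hyperbolicArcTime_eq_log {γ : ℝ} (hγ : 1 ≤ γ) : hyperbolicArcTime γ = log γ := by
  have hγ₀ : 0 < γ := zero_lt_one.trans_le hγ
  have radicand_eq :
      (γ ^ 2 - 1) * (γ ^ 2 - 1) / (4 * γ ^ 2) = ((γ ^ 2 - 1) / (2 * γ)) ^ 2 := by
    ring
  have root_nonneg : 0 ≤ (γ ^ 2 - 1) / (2 * γ) :=
    div_nonneg (sub_nonneg.2 (one_le_pow₀ hγ)) (by positivity)
  rw [hyperbolicArcTime, radicand_eq, sqrt_sq root_nonneg, arsinh_sq_sub_one_div_two_mul hγ₀]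

theorem trigonometricArcTime_eq_pi_div_four {γ : ℝ} (hγ : γ ^ 4 ≠ 1) :
    trigonometricArcTime γ = π / 4 := by
  have radicand_eq : (γ ^ 2 - 1) * (γ ^ 2 + 1) / (2 * (γ ^ 4 - 1)) = 1 / 2 := by
    have factored : (γ ^ 2 - 1) * (γ ^ 2 + 1) = γ ^ 4 - 1 := by ring
    rw [factored, div_mul_cancel_right₀ (sub_ne_zero.2 hγ), one_div]
  rw [trigonometricArcTime, radicand_eq, arcsin_sqrt_one_half]

theorem transferTime_eq_log_add {γ : ℝ} (hγ : 1 < γ) : transferTime γ = log γ + π / 4 := by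
  rw [transferTime, hyperbolicArcTime_eq_log hγ.le,
    trigonometricArcTime_eq_pi_div_four (one_lt_pow₀ hγ four_ne_zero).ne']

theorem tendsto_transferTime_div_log :
    Tendsto (fun γ => transferTime γ / log γ) atTop (nhds 1) := by
  refine (tendsto_add_const_div_self tendsto_log_atTop (π / 4)).congr' ?_
  filter_upwards [eventually_gt_atTop 1] with γ hγ
  rw [transferTime_eq_log_add hγ]

/-- For `γ > 1`, `arsinh((γ² − 1)/(2γ)) = ln γ`. Consequently, for
`u₁ = u₂ = 1` the one-switching transfer time from `(1,0)` to `(γ,0)` equals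
`T₀(γ) = ln γ + π/4`, and `T₀(γ)/ln γ → 1` as `γ → ∞`: the cooling time
diverges logarithmically as the target temperature approaches absolute zero
(the unattainability principle of the third law of thermodynamics). -/
theorem cooling_time_logarithmic :
    (∀ γ : ℝ, 1 < γ → Real.arsinh ((γ ^ 2 - 1) / (2 * γ)) = Real.log γ) ∧
    (∀ γ : ℝ, 1 < γ →
      Real.arsinh (Real.sqrt ((γ ^ 2 - 1) * (γ ^ 2 - 1) / (4 * γ ^ 2))) +
        Real.arcsin (Real.sqrt ((γ ^ 2 - 1) * (γ ^ 2 + 1) / (2 * (γ ^ 4 - 1))))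
      = Real.log γ + π / 4) ∧
    Filter.Tendsto (fun γ : ℝ =>
      (Real.arsinh (Real.sqrt ((γ ^ 2 - 1) * (γ ^ 2 - 1) / (4 * γ ^ 2))) +
        Real.arcsin (Real.sqrt ((γ ^ 2 - 1) * (γ ^ 2 + 1) / (2 * (γ ^ 4 - 1)))))
        / Real.log γ)
      Filter.atTop (nhds 1) :=
  ⟨fun _ hγ => arsinh_sq_sub_one_div_two_mul (zero_lt_one.trans hγ),
    fun _ hγ => transferTime_eq_log_add hγ,
    tendsto_transferTime_div_log⟩
end
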